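/- Let T be a tree on n ≥ 3 vertices with exactly p pendant vertices. Then there exists a set B of 2-element subsets of the vertex set with |B| = 2(n − p) such that the rows of Max4PC_T indexed by B form a basis of the row space of Max4PC_T over the rationals, and the determinant of the principal submatrix Max4PC_T[B,B] (rows and columns restricted to B) equals (−1)^{n−p} · 2^{2(n−p−1)}. -/

import Mathlib

open SimpleGraph

variable {V : Type*}

/-- The maximum of the three four-point sums for vertices `w, x, y, z`:
`max (d w x + d y z) (max (d w y + d x z) (d w z + d x y))`.
This is the entry of the matrix `Max4PC` in row `{w,x}` and column `{y,z}`. -/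
noncomputable def max4 (G : SimpleGraph V) (w x y z : V) : ℕ :=
  max (G.dist w x + G.dist y z) (max (G.dist w y + G.dist x z) (G.dist w z + G.dist x y))

/-- The `Max4PC` entry as a symmetric function of two unordered pairs. -/
noncomputable def max4Sym2 (G : SimpleGraph V) : Sym2 V → Sym2 V → ℕ :=
  Sym2.lift₂ ⟨fun w x y z => max4 G w x y z, by
    intro a₁ a₂ b₁ b₂
    simp only [max4]
    constructor
    · rw [show G.dist a₂ a₁ = G.dist a₁ a₂ from G.dist_comm]
      omega
    · rw [show G.dist b₂ b₁ = G.dist b₁ b₂ from G.dist_comm]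
      omega⟩

/-- The matrix `Max4PC_T`, with rows and columns indexed by the 2-element
subsets of the vertex set (non-diagonal elements of `Sym2 V`), over `ℚ`. -/
noncomputable def max4Matrix [Fintype V] [DecidableEq V] (G : SimpleGraph V) :
    Matrix {s : Sym2 V // ¬ s.IsDiag} {s : Sym2 V // ¬ s.IsDiag} ℚ :=
  fun p q => (max4Sym2 G p.1 q.1 : ℚ)

/-!
Root the tree at a non-pendant vertex `ρ`. The distance of two vertices is the number of vertices
`v` whose subtree contains exactly one of them. The subtrees form a laminar family, which forces
the maximum in `Max4PC` to be `d(w,x) + d(y,z)` plus twice the number of subtrees separating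
`{w,x}` from `{y,z}`, that is, containing one pair and disjoint from the other. Neither the whole
tree nor the one-vertex subtree of a leaf separates two pairs, so only the `n - p` non-pendant
vertices count. Recording for each of them whether a pair lies inside or outside its subtree (and
the distance, at `ρ`) turns the pairs into vectors of `ℤ^(2(n-p))` whose Gram matrix is `Max4PC`,
for an orthogonal sum of hyperbolic planes of weight `1` at `ρ` and `2` elsewhere; this form has
determinant `(-1)^(n-p) * 2^(2(n-p-1))`.

If `ρ` is chosen adjacent to a leaf `r`, and `l` is another leaf, the pairs `{r,w}` with `w`
non-pendant, `{r,l}`, and `{v, a child of v}` with `v ≠ ρ` non-pendant generate this lattice, and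
there are `2(n-p)` of them. Hence they are a lattice basis, and passing to it does not change the
determinant of the form.
-/

section RootedTree

variable {G : SimpleGraph V} {r u v w x y z : V}

/-- `y` is the parent of `x` in the tree `G` rooted at `r`: the neighbour of `x` one step closer
to `r`. -/
def IsParent (G : SimpleGraph V) (r y x : V) : Prop :=
  G.Adj y x ∧ G.dist r x = G.dist r y + 1

/-- The vertex set of the subtree hanging at `v` in the tree `G` rooted at `r`, described
metrically: `x` belongs to it when some geodesic from `r` to `x` passes through `v`. -/
def subtree (G : SimpleGraph V) (r v : V) : Set V :=
  {x | G.dist r x = G.dist r v + G.dist v x}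

theorem mem_subtree : x ∈ subtree G r v ↔ G.dist r x = G.dist r v + G.dist v x := Iff.rfl

theorem self_mem_subtree : v ∈ subtree G r v := by simp [mem_subtree]

theorem mem_subtree_root : x ∈ subtree G r r := by simp [mem_subtree]

theorem root_mem_subtree_iff (hG : G.Connected) : r ∈ subtree G r v ↔ v = r := by
  rw [mem_subtree, G.dist_self, G.dist_comm (u := v), ← two_mul, ← hG.dist_eq_zero_iff,
    G.dist_comm (u := v)]
  omega

theorem exists_isParent (hG : G.Connected) (hx : x ≠ r) : ∃ y, IsParent G r y x := by
  obtain ⟨p, hp⟩ := hG.exists_walk_length_eq_dist x r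
  cases p with
  | nil => exact absurd rfl hx
  | @cons _ y _ hxy q =>
    refine ⟨y, hxy.symm, ?_⟩
    have h_tail : G.dist r y ≤ q.length := G.dist_comm.trans_le (dist_le q)
    have h_step := hxy.symm.diff_dist_adj (u := r)
    rw [Walk.length_cons, G.dist_comm] at hp
    omega

theorem isParent_or_isParent (hG : G.IsTree) (r : V) (h : G.Adj x y) :
    IsParent G r x y ∨ IsParent G r y x :=
  (hG.dist_eq_dist_add_one_of_adj r h).symm.imp (⟨h, ·⟩) (⟨h.symm, ·⟩)

theorem IsParent.asymm (h : IsParent G r x y) : ¬IsParent G r y x := by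
  rintro ⟨_, h'⟩
  have := h.2
  omega

theorem IsParent.unique (hG : G.IsTree) (hy : IsParent G r y x) (hz : IsParent G r z x) :
    y = z := by
  have exists_path : ∀ {t}, IsParent G r t x → ∃ p : G.Walk r x, p.IsPath ∧ p.penultimate = t := by
    rintro t ⟨h_adj, h_dist⟩
    obtain ⟨p, hp⟩ := hG.connected.exists_walk_length_eq_dist r t
    refine ⟨p.concat h_adj, Walk.isPath_of_length_eq_dist _ ?_, p.penultimate_concat h_adj⟩
    rw [Walk.length_concat, hp, h_dist]
  obtain ⟨p, hp, rfl⟩ := exists_path hy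
  obtain ⟨q, hq, rfl⟩ := exists_path hz
  rw [(hG.existsUnique_path r x).unique hp hq]

theorem IsParent.notMem_subtree (h : IsParent G r y x) : y ∉ subtree G r x := by
  have := h.2
  rw [mem_subtree]
  omega

theorem IsParent.mem_subtree_iff (hG : G.IsTree) (h : IsParent G r y x) :
    x ∈ subtree G r v ↔ x = v ∨ y ∈ subtree G r v := by
  have h_step := h.2
  simp only [mem_subtree]
  constructor
  · intro hx
    refine or_iff_not_imp_left.2 fun hxv => ?_
    obtain ⟨z, hzx, hz⟩ := exists_isParent hG.connected hxv
    have h_tri := hG.connected.dist_triangle (u := r) (v := v) (w := z)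
    have h_adj := hzx.diff_dist_adj (u := r)
    obtain rfl : z = y := IsParent.unique hG ⟨hzx, by omega⟩ h
    omega
  · rintro (rfl | hy)
    · simp
    · have h_tri := hG.connected.dist_triangle (u := r) (v := v) (w := x)
      have h_adj := h.1.diff_dist_adj (u := v)
      omega

theorem subtree_subset_subtree (hG : G.Connected) (h : v ∈ subtree G r u) :
    subtree G r v ⊆ subtree G r u := by
  intro x hx
  have h₁ := hG.dist_triangle (u := r) (v := u) (w := x)
  have h₂ := hG.dist_triangle (u := u) (v := v) (w := x)
  simp only [mem_subtree] at *
  omega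

theorem IsParent.mem_subtree_iff_isParent (hG : G.IsTree) (h : IsParent G r y z) :
    x ∈ subtree G r z ↔ IsParent G x z y := by
  constructor
  · intro hx
    refine (isParent_or_isParent hG x h.1).resolve_left fun ⟨_, h_farther⟩ => ?_
    have h_step := h.2
    have h_tri := hG.connected.dist_triangle (u := r) (v := y) (w := x)
    rw [mem_subtree] at hx
    rw [G.dist_comm (u := x), G.dist_comm (u := x)] at h_farther
    omega
  · intro hx
    induction hd : G.dist x z using Nat.strong_induction_on generalizing y z with
    | _ d ih =>
      by_cases hzx : z = x
      · exact hzx ▸ self_mem_subtree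
      obtain ⟨t, ht⟩ := exists_isParent hG.connected hzx
      have h_child : IsParent G r z t := by
        refine (isParent_or_isParent hG r ht.1).resolve_left fun htz => hx.asymm ?_
        rwa [h.unique hG htz]
      have hxt : x ∈ subtree G r t := ih _ (by have := ht.2; omega) h_child ht rfl
      have htz : t ∈ subtree G r z := (h_child.mem_subtree_iff hG).2 (.inr self_mem_subtree)
      exact subtree_subset_subtree hG.connected htz hxt

theorem mem_subtree_or_mem_subtree (hG : G.IsTree) (hu : x ∈ subtree G r u)
    (hv : x ∈ subtree G r v) : v ∈ subtree G r u ∨ u ∈ subtree G r v := by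
  induction hd : G.dist r x generalizing x with
  | zero =>
    obtain rfl := hG.connected.dist_eq_zero_iff.1 hd
    obtain rfl : r = u := hG.connected.dist_eq_zero_iff.1 (by have := mem_subtree.1 hu; omega)
    exact .inl mem_subtree_root
  | succ d ih =>
    obtain ⟨y, hy⟩ := exists_isParent hG.connected (r := r) (x := x) (by rintro rfl; simp at hd)
    rcases (hy.mem_subtree_iff hG).1 hu with rfl | hyu
    · exact .inr hv
    rcases (hy.mem_subtree_iff hG).1 hv with rfl | hyv
    · exact .inl hu
    exact ih hyu hyv (by have := hy.2; omega)

theorem subtree_laminar (hG : G.IsTree) (r u v : V) :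
    Disjoint (subtree G r u) (subtree G r v) ∨ subtree G r u ⊆ subtree G r v ∨
      subtree G r v ⊆ subtree G r u := by
  refine or_iff_not_imp_left.2 fun h => ?_
  obtain ⟨x, hu, hv⟩ := Set.not_disjoint_iff.1 h
  exact (mem_subtree_or_mem_subtree hG hu hv).symm.imp (subtree_subset_subtree hG.connected)
    (subtree_subset_subtree hG.connected)

-- `c` is the endpoint of the edge `yz` farther from `r`.
theorem IsParent.exists_separating_subtree (hG : G.IsTree) (r : V) (h : IsParent G x z y) :
    ∃ c, ¬(x ∈ subtree G r c ↔ y ∈ subtree G r c) ∧ (x ∈ subtree G r c ↔ z ∈ subtree G r c) ∧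
      ∀ v ≠ c, y ∈ subtree G r v ↔ z ∈ subtree G r v := by
  rcases isParent_or_isParent hG r h.1 with hzy | hyz
  · have hx : x ∉ subtree G r y := fun hx => h.asymm ((hzy.mem_subtree_iff_isParent hG).1 hx)
    refine ⟨y, by simp [hx, self_mem_subtree], by simp [hx, hzy.notMem_subtree], fun v hv => ?_⟩
    simp [hzy.mem_subtree_iff hG, hv.symm]
  · have hx : x ∈ subtree G r z := (hyz.mem_subtree_iff_isParent hG).2 h
    refine ⟨z, by simp [hx, hyz.notMem_subtree], by simp [hx, self_mem_subtree], fun v hv => ?_⟩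
    simp [hyz.mem_subtree_iff hG, hv.symm]

open scoped Classical in
theorem dist_eq_card_separating_subtree [Fintype V] (hG : G.IsTree) (r x y : V) :
    G.dist x y =
      (Finset.univ.filter fun v => ¬(x ∈ subtree G r v ↔ y ∈ subtree G r v)).card := by
  induction hd : G.dist x y generalizing y with
  | zero =>
    obtain rfl := hG.connected.dist_eq_zero_iff.1 hd
    simp
  | succ d ih =>
    obtain ⟨z, hz⟩ := exists_isParent hG.connected (r := x) (x := y) (by rintro rfl; simp at hd)
    obtain ⟨c, hcy, hcz, h_off⟩ := hz.exists_separating_subtree hG r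
    have h_insert : (Finset.univ.filter fun v => ¬(x ∈ subtree G r v ↔ y ∈ subtree G r v)) =
        insert c (Finset.univ.filter fun v => ¬(x ∈ subtree G r v ↔ z ∈ subtree G r v)) := by
      ext v
      by_cases hv : v = c
      · simpa [hv] using hcy
      · simp [hv, h_off v hv]
    rw [h_insert, Finset.card_insert_of_notMem (by simp [hcz]), ← ih z (by have := hz.2; omega)]

section Leaf

variable [G.LocallyFinite]

theorem isParent_of_degree_eq_one (hG : G.Connected) (hx : G.degree x = 1) (h : G.Adj y x)
    (hxr : x ≠ r) : IsParent G r y x := by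
  obtain ⟨z, hz⟩ := exists_isParent hG hxr
  rwa [(degree_eq_one_iff_existsUnique_adj.1 hx).unique h.symm hz.1.symm]

theorem degree_ne_one_of_adj_of_degree_eq_one (hG : G.Connected) (hV : 3 ≤ ENat.card V)
    (hx : G.degree x = 1) (h : G.Adj x y) : G.degree y ≠ 1 := by
  intro hy
  obtain ⟨z, hzx, hzy⟩ := ENat.exists_ne_ne_of_three_le hV x y
  exact (isParent_of_degree_eq_one hG hx h.symm hzx.symm).asymm
    (isParent_of_degree_eq_one hG hy h hzy.symm)

theorem eq_of_mem_subtree_of_degree_eq_one (hG : G.IsTree) (hv : G.degree v = 1) (hvr : v ≠ r)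
    (hx : x ∈ subtree G r v) : x = v := by
  by_contra hxv
  obtain ⟨y, hy⟩ := exists_isParent hG.connected hvr
  exact ((hy.mem_subtree_iff_isParent hG).1 hx).asymm
    (isParent_of_degree_eq_one hG.connected hv hy.1 (Ne.symm hxv))

theorem IsParent.degree_ne_one (hG : G.IsTree) (h : IsParent G r y x) (hy : y ≠ r) :
    G.degree y ≠ 1 := fun hd =>
  h.1.ne' (eq_of_mem_subtree_of_degree_eq_one hG hd hy
    ((h.mem_subtree_iff hG).2 (.inr self_mem_subtree)))

theorem exists_isParent_of_degree_ne_one (hG : G.IsTree) (hv : G.degree v ≠ 1) (hvr : v ≠ r) :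
    ∃ c, IsParent G r v c := by
  obtain ⟨y, hy⟩ := exists_isParent hG.connected hvr
  obtain ⟨c, hvc, hcy⟩ : ∃ c, G.Adj v c ∧ c ≠ y := by
    by_contra! h_all
    exact hv (degree_eq_one_iff_existsUnique_adj.2 ⟨y, hy.1.symm, h_all⟩)
  exact ⟨c, (isParent_or_isParent hG r hvc).resolve_right fun h => hcy (h.unique hG hy)⟩

theorem mem_subtree_iff_of_degree_eq_one (hG : G.IsTree) (hx : G.degree x = 1) (h : G.Adj r x)
    (hxv : x ≠ v) : x ∈ subtree G r v ↔ v = r := by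
  have h_parent := isParent_of_degree_eq_one hG.connected hx h h.ne'
  rw [h_parent.mem_subtree_iff hG, root_mem_subtree_iff hG.connected, or_iff_right hxv]

theorem dist_of_degree_eq_one (hG : G.Connected) (hx : G.degree x = 1) (h : G.Adj y x)
    (hzx : z ≠ x) : G.dist x z = G.dist y z + 1 := by
  have h_parent := isParent_of_degree_eq_one hG hx h hzx.symm
  rw [G.dist_comm, h_parent.2, G.dist_comm]

end Leaf

end RootedTree

section LaminarFamily

variable {ι : Type*} [Fintype ι] {G : SimpleGraph V} {S : ι → Set V}

/-- The set `A` separates the pair `w, x` from the pair `y, z`: one pair lies inside `A` and the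
other one outside. -/
def Separates (A : Set V) (w x y z : V) : Prop :=
  (w ∈ A ↔ x ∈ A) ∧ (y ∈ A ↔ z ∈ A) ∧ ¬(w ∈ A ↔ y ∈ A)

theorem separates_swap_right {A : Set V} {w x y z : V} :
    Separates A w x z y ↔ Separates A w x y z := by
  unfold Separates
  tauto

theorem not_separates_of_laminar {A B : Set V} (h : Disjoint A B ∨ A ⊆ B ∨ B ⊆ A) {w x y z : V}
    (hA : Separates A w x y z) : ¬Separates B w y x z := by
  intro hB
  have h_cells : (A ∩ B).Nonempty ∧ (A \ B).Nonempty ∧ (B \ A).Nonempty := by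
    simp only [Separates, Set.Nonempty, Set.mem_inter_iff, Set.mem_sdiff] at *
    grind
  rcases h with h | h | h
  · exact Set.not_disjoint_iff_nonempty_inter.2 h_cells.1 h
  · exact Set.sdiff_nonempty.1 h_cells.2.1 h
  · exact Set.sdiff_nonempty.1 h_cells.2.2 h

open scoped Classical in
theorem dist_add_dist_add_card_separates
    (h_dist : ∀ x y, G.dist x y = (Finset.univ.filter fun i => ¬(x ∈ S i ↔ y ∈ S i)).card)
    (w x y z : V) :
    G.dist w x + G.dist y z + 2 * (Finset.univ.filter fun i => Separates (S i) w x y z).card =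
      G.dist w y + G.dist x z + 2 * (Finset.univ.filter fun i => Separates (S i) w y x z).card := by
  simp only [h_dist, Finset.card_filter, Finset.mul_sum, ← Finset.sum_add_distrib]
  refine Finset.sum_congr rfl fun i _ => ?_
  by_cases hw : w ∈ S i <;> by_cases hx : x ∈ S i <;> by_cases hy : y ∈ S i <;>
    by_cases hz : z ∈ S i <;> simp [Separates, hw, hx, hy, hz]

open scoped Classical in
theorem max4_eq_of_laminar
    (h_dist : ∀ x y, G.dist x y = (Finset.univ.filter fun i => ¬(x ∈ S i ↔ y ∈ S i)).card)
    (h_laminar : ∀ i j, Disjoint (S i) (S j) ∨ S i ⊆ S j ∨ S j ⊆ S i) (w x y z : V) :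
    max4 G w x y z = G.dist w x + G.dist y z +
      2 * (Finset.univ.filter fun i => Separates (S i) w x y z).card := by
  have h_swap₁ := dist_add_dist_add_card_separates h_dist w x y z
  have h_swap₂ := dist_add_dist_add_card_separates h_dist w x z y
  simp only [separates_swap_right (x := x), G.dist_comm (u := z) (v := y)] at h_swap₂
  have h_zero : (Finset.univ.filter fun i => Separates (S i) w x y z).card = 0 ∨
      (Finset.univ.filter fun i => Separates (S i) w y x z).card = 0 := by
    simp only [Finset.card_eq_zero, Finset.filter_eq_empty_iff, Finset.mem_univ, true_imp_iff]
    by_contra! h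
    obtain ⟨⟨i, hi⟩, j, hj⟩ := h
    exact not_separates_of_laminar (h_laminar i j) hi hj
  unfold max4
  omega

end LaminarFamily

section SeparatingSubtree

variable {G : SimpleGraph V}

theorem not_separates_subtree_root {r w x y z : V} : ¬Separates (subtree G r r) w x y z := by
  simp [Separates, mem_subtree_root]

theorem not_separates_subtree_of_degree_eq_one [G.LocallyFinite] (hG : G.IsTree) {r v w x y z : V}
    (hv : G.degree v = 1) (hvr : v ≠ r) (hwx : w ≠ x) (hyz : y ≠ z) :
    ¬Separates (subtree G r v) w x y z := by
  have h_sub : (subtree G r v).Subsingleton := fun _ ha _ hb =>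
    (eq_of_mem_subtree_of_degree_eq_one hG hv hvr ha).trans
      (eq_of_mem_subtree_of_degree_eq_one hG hv hvr hb).symm
  rintro ⟨hw, hy, h⟩
  by_cases hwA : w ∈ subtree G r v
  · exact hwx (h_sub hwA (hw.1 hwA))
  · have hyA : y ∈ subtree G r v := by tauto
    exact hyz (h_sub hyA (hy.1 hyA))

end SeparatingSubtree

section GramMatrix

open Matrix

variable {R K P J : Type*} [CommRing R] [Field K] [Fintype J]

theorem span_range_row_eq_top_iff_isUnit [DecidableEq J] {A : Matrix J J R} :
    Submodule.span R (Set.range A.row) = ⊤ ↔ IsUnit A := by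
  rw [← range_vecMulLinear, LinearMap.range_eq_top, ← vecMul_surjective_iff_isUnit]
  rfl

theorem det_submatrix_mul_mul_transpose [DecidableEq J] (C : Matrix P J R) (D : Matrix J J R)
    (φ : J → P) :
    ((C * D * Cᵀ).submatrix φ φ).det = (C.submatrix φ id).det ^ 2 * D.det := by
  have h_factor : (C * D * Cᵀ).submatrix φ φ =
      C.submatrix φ id * D * (C.submatrix φ id)ᵀ := by
    ext i j
    simp [mul_apply]
  rw [h_factor, det_mul, det_mul, det_transpose]
  ring

theorem span_range_row_comp_mul {n : Type*} {C : Matrix P J R} (E : Matrix J n R) {φ : J → P}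
    (h : Submodule.span R (Set.range (C.submatrix φ id).row) = ⊤) :
    Submodule.span R (Set.range fun j => (C * E).row (φ j)) =
      Submodule.span R (Set.range (C * E).row) := by
  have h_top : Submodule.span R (Set.range C.row) = ⊤ :=
    top_unique (h.symm.le.trans (Submodule.span_mono (Set.range_comp_subset_range φ C.row)))
  have h_row : (C * E).row = E.vecMulLinear ∘ C.row := rfl
  have h_row_comp : (fun j => (C * E).row (φ j)) = E.vecMulLinear ∘ (C.submatrix φ id).row := rfl
  rw [h_row_comp, h_row, Set.range_comp, Set.range_comp, Submodule.span_image,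
    Submodule.span_image, h, h_top]

theorem linearIndependent_row_comp_of_det_submatrix_ne_zero [DecidableEq J]
    {M : Matrix P P K} {φ : J → P} (h : (M.submatrix φ φ).det ≠ 0) :
    LinearIndependent K fun j => M.row (φ j) :=
  LinearIndependent.of_comp (LinearMap.funLeft K K φ) (linearIndependent_rows_of_det_ne_zero h)

-- The rows of `C` are vectors of the lattice `ℤ^J`, and `M` is their Gram matrix for the form `D`.
-- A lattice basis has unimodular coordinate matrix, so its Gram determinant is that of the form.
theorem exists_finset_rows_basis_of_gram [CharZero K] [DecidableEq P] [DecidableEq J]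
    {M : Matrix P P K} {C : Matrix P J ℤ} {D : Matrix J J ℤ} {φ : J → P}
    (hM : M = (C * D * Cᵀ).map (Int.castRingHom K)) (hD : D.det ≠ 0)
    (hφ : Submodule.span ℤ (Set.range (C.submatrix φ id).row) = ⊤) :
    ∃ B : Finset P, B.card = Fintype.card J ∧
      LinearIndependent K (fun b : ↥B => M b.1) ∧
      Submodule.span K (Set.range fun b : ↥B => M b.1) =
        Submodule.span K (Set.range fun s => M s) ∧
      (M.submatrix (fun b : ↥B => b.1) (fun b : ↥B => b.1)).det = D.det := by
  have h_unit : IsUnit (C.submatrix φ id) := span_range_row_eq_top_iff_isUnit.1 hφ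
  have h_det : (M.submatrix φ φ).det = D.det := by
    rw [hM, submatrix_map, ← RingHom.mapMatrix_apply, ← RingHom.map_det,
      det_submatrix_mul_mul_transpose,
      Int.isUnit_sq ((isUnit_iff_isUnit_det _).1 h_unit), one_mul, eq_intCast]
  have h_indep : LinearIndependent K fun j => M.row (φ j) :=
    linearIndependent_row_comp_of_det_submatrix_ne_zero (by simpa [h_det] using hD)
  have h_span : Submodule.span K (Set.range fun j => M.row (φ j)) =
      Submodule.span K (Set.range M.row) := by
    rw [hM, Matrix.map_mul, Matrix.map_mul, Matrix.mul_assoc]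
    exact span_range_row_comp_mul _
      (span_range_row_eq_top_iff_isUnit.2 (h_unit.map (Int.castRingHom K).mapMatrix))
  have h_inj : Function.Injective φ := h_indep.injective.of_comp
  let e : J ≃ ↥(Finset.univ.image φ) :=
    (Equiv.ofInjective φ h_inj).trans (Equiv.subtypeEquivRight (by simp))
  refine ⟨Finset.univ.image φ, by simp [Finset.card_image_of_injective _ h_inj],
    (linearIndependent_equiv e).1 h_indep, ?_, ?_⟩
  · rw [← e.surjective.range_comp]
    exact h_span
  · rw [← h_det, ← det_submatrix_equiv_self e]
    rfl

theorem det_fromBlocks_zero_zero {I : Type*} [Fintype I] [DecidableEq I] (A B : Matrix I I R) :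
    (fromBlocks 0 A B 0).det = (-1) ^ Fintype.card I * (A.det * B.det) := by
  have h_swap : (fromBlocks 0 1 1 0 : Matrix (I ⊕ I) (I ⊕ I) R).det =
      (-1) ^ Fintype.card I := by
    have h_col : (fromBlocks 0 1 1 0 : Matrix (I ⊕ I) (I ⊕ I) R) * fromBlocks 1 0 1 1 =
        fromBlocks 1 1 1 0 := by
      simp [fromBlocks_multiply]
    simpa [det_neg, det_fromBlocks_zero₁₂, det_fromBlocks_one₁₁] using congrArg det h_col
  have h_factor : fromBlocks 0 A B 0 = fromBlocks A 0 0 B * fromBlocks 0 1 1 0 := by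
    simp [fromBlocks_multiply]
  rw [h_factor, det_mul, det_fromBlocks_zero₁₂, h_swap, mul_comm]

end GramMatrix

section PairCoordinates

variable [Fintype V] {G : SimpleGraph V} [DecidableRel G.Adj]

/-- The non-pendant vertices of `G`; in a tree with at least three vertices these are the vertices
of degree at least two. -/
abbrev InnerVertex (G : SimpleGraph V) [DecidableRel G.Adj] : Type _ := {v : V // G.degree v ≠ 1}

theorem card_innerVertex (G : SimpleGraph V) [DecidableRel G.Adj] :
    Fintype.card (InnerVertex G) =
      Fintype.card V - (Finset.univ.filter fun v : V => G.degree v = 1).card := by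
  rw [Fintype.card_subtype_compl, Fintype.card_subtype]

theorem ne_of_degree_eq_one (v : InnerVertex G) {x : V} (hx : G.degree x = 1) : ↑v ≠ x :=
  fun h => v.2 (h ▸ hx)

theorem IsParent.exists_innerVertex {ρ : InnerVertex G} {x y : V} (hG : G.IsTree)
    (h : IsParent G ρ y x) : ∃ w : InnerVertex G, ↑w = y := by
  by_cases hy : y = ρ
  · exact ⟨ρ, hy.symm⟩
  · exact ⟨⟨y, h.degree_ne_one hG hy⟩, rfl⟩

/-- The distance between the two elements of an unordered pair. -/
noncomputable def pairDist (G : SimpleGraph V) : Sym2 V → ℕ :=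
  Sym2.lift ⟨G.dist, fun _ _ => G.dist_comm⟩

open scoped Classical in
theorem card_separates_subtree (hG : G.IsTree) (ρ : InnerVertex G) {w x y z : V} (hwx : w ≠ x)
    (hyz : y ≠ z) :
    (Finset.univ.filter fun v : V => Separates (subtree G ρ v) w x y z).card =
      (Finset.univ.filter fun v : InnerVertex G => Separates (subtree G ρ v) w x y z).card := by
  refine (Finset.card_nbij Subtype.val (fun v hv => by simpa using hv)
    Subtype.val_injective.injOn ?_).symm
  intro v hv
  replace hv : Separates (subtree G ρ v) w x y z := by simpa using hv
  refine ⟨⟨v, fun hd => ?_⟩, by simpa using hv, rfl⟩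
  by_cases hvρ : v = ρ
  · exact ρ.2 (hvρ ▸ hd)
  · exact not_separates_subtree_of_degree_eq_one hG hd hvρ hwx hyz hv

variable [DecidableEq V]

open scoped Classical in
/-- The integral coordinates of a pair of vertices in the tree `G` rooted at `ρ`. The coordinates
`inl v` and `inr v` tell whether the pair lies inside, respectively outside, the subtree at `v`.
As no pair lies outside the whole tree, `inr ρ` is free to record the distance instead. -/
noncomputable def pairCoord (G : SimpleGraph V) [DecidableRel G.Adj] (ρ : InnerVertex G)
    (s : Sym2 V) : InnerVertex G ⊕ InnerVertex G → ℤ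
  | .inl v => if ∀ x ∈ s, x ∈ subtree G ρ v then 1 else 0
  | .inr v => if v = ρ then pairDist G s else if ∀ x ∈ s, x ∉ subtree G ρ v then 1 else 0

/-- The matrix whose rows are the coordinate vectors of the two-element sets of vertices. -/
noncomputable def pairCoordMatrix (G : SimpleGraph V) [DecidableRel G.Adj] (ρ : InnerVertex G) :
    Matrix {s : Sym2 V // ¬s.IsDiag} (InnerVertex G ⊕ InnerVertex G) ℤ :=
  .of fun s => pairCoord G ρ s

/-- The weight of the hyperbolic plane spanned by `inl v` and `inr v` in `pairForm G ρ`. -/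
def pairWeight (ρ v : InnerVertex G) : ℤ := if v = ρ then 1 else 2

/-- The symmetric bilinear form for which `Max4PC` is the Gram matrix of the vectors
`pairCoord G ρ s`. -/
def pairForm (G : SimpleGraph V) [DecidableRel G.Adj] (ρ : InnerVertex G) :
    Matrix (InnerVertex G ⊕ InnerVertex G) (InnerVertex G ⊕ InnerVertex G) ℤ :=
  .fromBlocks 0 (.diagonal (pairWeight ρ)) (.diagonal (pairWeight ρ)) 0

theorem det_pairForm (ρ : InnerVertex G) :
    (pairForm G ρ).det = (-1) ^ Fintype.card (InnerVertex G) *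
      2 ^ (2 * (Fintype.card (InnerVertex G) - 1)) := by
  have h_prod : ∏ v, pairWeight ρ v = 2 ^ (Fintype.card (InnerVertex G) - 1) := by
    simp [pairWeight, Finset.prod_ite, Finset.filter_ne', Finset.card_erase_of_mem]
  rw [pairForm, det_fromBlocks_zero_zero, Matrix.det_diagonal, h_prod, ← pow_add, ← two_mul]

open scoped Classical in
theorem pairCoord_mk_inl (ρ v : InnerVertex G) (x y : V) :
    pairCoord G ρ s(x, y) (.inl v) =
      if x ∈ subtree G ρ v ∧ y ∈ subtree G ρ v then 1 else 0 := by
  simp [pairCoord]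

theorem pairCoord_mk_inr_root (ρ : InnerVertex G) (x y : V) :
    pairCoord G ρ s(x, y) (.inr ρ) = G.dist x y := by
  simp [pairCoord, pairDist]

open scoped Classical in
theorem pairCoord_mk_inr {ρ v : InnerVertex G} (hv : v ≠ ρ) (x y : V) :
    pairCoord G ρ s(x, y) (.inr v) =
      if x ∉ subtree G ρ v ∧ y ∉ subtree G ρ v then 1 else 0 := by
  simp [pairCoord, hv]

open scoped Classical in
theorem pairWeight_mul_pairCoord (ρ v : InnerVertex G) (w x y z : V) :
    pairWeight ρ v *
      (pairCoord G ρ s(w, x) (.inl v) * pairCoord G ρ s(y, z) (.inr v) +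
        pairCoord G ρ s(w, x) (.inr v) * pairCoord G ρ s(y, z) (.inl v)) =
      (if v = ρ then (G.dist w x + G.dist y z : ℤ) else 0) +
        2 * if Separates (subtree G ρ v) w x y z then 1 else 0 := by
  by_cases hv : v = ρ
  · subst hv
    simp [pairWeight, pairCoord_mk_inl, pairCoord_mk_inr_root, mem_subtree_root,
      not_separates_subtree_root, add_comm]
  · simp only [pairWeight, hv, if_false, pairCoord_mk_inl, pairCoord_mk_inr hv, Separates]
    by_cases hw : w ∈ subtree G ρ v <;> by_cases hx : x ∈ subtree G ρ v <;>
      by_cases hy : y ∈ subtree G ρ v <;> by_cases hz : z ∈ subtree G ρ v <;>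
      simp [hw, hx, hy, hz]

theorem max4Sym2_eq_sum_pairCoord (hG : G.IsTree) (ρ : InnerVertex G) {s t : Sym2 V}
    (hs : ¬s.IsDiag) (ht : ¬t.IsDiag) :
    (max4Sym2 G s t : ℤ) = ∑ v, pairWeight ρ v *
      (pairCoord G ρ s (.inl v) * pairCoord G ρ t (.inr v) +
        pairCoord G ρ s (.inr v) * pairCoord G ρ t (.inl v)) := by
  classical
  induction s using Sym2.ind with | _ w x
  induction t using Sym2.ind with | _ y z
  have h_max : max4Sym2 G s(w, x) s(y, z) = max4 G w x y z := rfl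
  rw [Sym2.mk_isDiag_iff] at hs ht
  rw [h_max, max4_eq_of_laminar (dist_eq_card_separating_subtree hG ρ) (subtree_laminar hG ρ),
    card_separates_subtree hG ρ hs ht]
  simp only [pairWeight_mul_pairCoord, Finset.sum_add_distrib, ← Finset.mul_sum]
  simp

theorem max4Matrix_eq_gram (hG : G.IsTree) (ρ : InnerVertex G) :
    max4Matrix G =
      (pairCoordMatrix G ρ * pairForm G ρ * (pairCoordMatrix G ρ).transpose).map
        (Int.castRingHom ℚ) := by
  ext s t
  have h_entry : max4Matrix G s t = ((max4Sym2 G s t : ℤ) : ℚ) := by simp [max4Matrix]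
  rw [h_entry, max4Sym2_eq_sum_pairCoord hG ρ s.2 t.2, Matrix.map_apply, eq_intCast]
  congr 1
  simp only [pairCoordMatrix, pairForm, Matrix.mul_apply, Matrix.of_apply, Fintype.sum_sum_type,
    ← Finset.sum_add_distrib, Matrix.transpose_apply, Matrix.fromBlocks_apply₁₁,
    Matrix.fromBlocks_apply₁₂, Matrix.fromBlocks_apply₂₁, Matrix.fromBlocks_apply₂₂,
    Matrix.zero_apply, Matrix.diagonal_apply, mul_zero, mul_ite, zero_add, add_zero,
    Finset.sum_ite_eq', Finset.mem_univ, if_true]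
  exact Finset.sum_congr rfl fun v _ => by ring

end PairCoordinates

section StandardVectors

variable {R I J : Type*} [Ring R] [Finite I] [Finite J] [DecidableEq I] [DecidableEq J]

theorem mem_of_forall_single_mem {N : Submodule R (J → R)} {f : J → R}
    (h : ∀ j, f j ≠ 0 → Pi.single j 1 ∈ N) : f ∈ N := by
  have := Fintype.ofFinite J
  rw [pi_eq_sum_univ' f]
  refine N.sum_mem fun j _ => ?_
  by_cases hj : f j = 0
  · simp [hj]
  · exact N.smul_mem _ (h j hj)

theorem sumElim_inl_zero_mem {N : Submodule R (I ⊕ J → R)} (hN : ∀ j, Pi.single (.inr j) 1 ∈ N)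
    {f : I ⊕ J → R} (hf : f ∈ N) : Sum.elim (f ∘ .inl) 0 ∈ N := by
  suffices h : f - Sum.elim (f ∘ .inl) 0 ∈ N by simpa using N.sub_mem hf h
  refine mem_of_forall_single_mem ?_
  rintro (i | j) h_ne
  · simp at h_ne
  · exact hN j

end StandardVectors

section SpanningPairs

variable [Fintype V] [DecidableEq V] {G : SimpleGraph V} [DecidableRel G.Adj]
  {ρ : InnerVertex G} {r l x y : V} {N : Submodule ℤ (InnerVertex G ⊕ InnerVertex G → ℤ)}

theorem pairCoord_leaf_sub_of_isParent (hG : G.IsTree) (hr : G.degree r = 1)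
    (hρr : G.Adj ρ r) (h : IsParent G ρ y x) (hxr : x ≠ r) :
    pairCoord G ρ s(r, x) - pairCoord G ρ s(r, y) =
      Pi.single (.inr ρ) 1 -
        Sum.elim (0 : InnerVertex G → ℤ) fun v : InnerVertex G => if ↑v = x then 1 else 0 := by
  classical
  have hyr : y ≠ r := fun hy => h.degree_ne_one hG (hy ▸ hρr.ne') (hy ▸ hr)
  have hρx : ↑ρ ≠ x := by
    rintro rfl
    exact absurd h.2 (by simp)
  have hr_mem : ∀ v : InnerVertex G, r ∈ subtree G ρ v ↔ v = ρ := fun v =>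
    (mem_subtree_iff_of_degree_eq_one hG hr hρr (ne_of_degree_eq_one v hr).symm).trans
      Subtype.coe_inj
  ext (v | v) <;> by_cases hv : v = ρ
  · simp [hv, pairCoord_mk_inl, mem_subtree_root]
  · simp [hv, pairCoord_mk_inl, hr_mem]
  · have h_dist := h.2
    simp [hv, hρx, pairCoord_mk_inr_root, dist_of_degree_eq_one hG.connected hr hρr, hxr, hyr,
      h_dist]
  · by_cases hvx : x = v
    · have hy : y ∉ subtree G ρ v := hvx ▸ h.notMem_subtree
      simp [hv, hvx, pairCoord_mk_inr hv, hr_mem, self_mem_subtree, hy]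
    · simp [hv, hvx, Ne.symm hvx, pairCoord_mk_inr hv, hr_mem, h.mem_subtree_iff hG]

theorem single_inr_mem_of_pairCoord_leaf_mem (hG : G.IsTree) (hr : G.degree r = 1) (hρr : G.Adj ρ r)
    (hl : G.degree l = 1) (hlr : l ≠ r) (hN : ∀ w : InnerVertex G, pairCoord G ρ s(r, w) ∈ N)
    (hNl : pairCoord G ρ s(r, l) ∈ N) (v : InnerVertex G) : Pi.single (.inr v) 1 ∈ N := by
  have h_sub : ∀ x ≠ ↑ρ, x ≠ r → pairCoord G ρ s(r, x) ∈ N → Pi.single (.inr ρ) 1 -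
      Sum.elim (0 : InnerVertex G → ℤ) (fun v : InnerVertex G => if ↑v = x then 1 else 0) ∈ N := by
    intro x hxρ hxr hx
    obtain ⟨y, hy⟩ := exists_isParent hG.connected hxρ
    obtain ⟨y, rfl⟩ := hy.exists_innerVertex hG
    rw [← pairCoord_leaf_sub_of_isParent hG hr hρr hy hxr]
    exact N.sub_mem hx (hN y)
  have h_root : Pi.single (.inr ρ) 1 ∈ N := by
    convert h_sub l (ne_of_degree_eq_one ρ hl).symm hlr hNl using 1
    rw [eq_comm, sub_eq_self]
    ext (u | u)
    · rfl
    · exact if_neg (ne_of_degree_eq_one u hl)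
  by_cases hv : v = ρ
  · exact hv ▸ h_root
  convert N.sub_mem h_root
    (h_sub v (Subtype.coe_ne_coe.2 hv) (ne_of_degree_eq_one v hr) (hN v)) using 1
  rw [sub_sub_cancel]
  ext (u | u) <;> simp [Pi.single_apply, Subtype.coe_inj]

open scoped Classical in
theorem single_inl_mem_of_ancestor_indicator_mem (hG : G.IsTree)
    (hN : ∀ v : InnerVertex G,
      Sum.elim (fun u : InnerVertex G => if ↑v ∈ subtree G ρ u then 1 else 0) 0 ∈ N)
    (v : InnerVertex G) : Pi.single (.inl v) 1 ∈ N := by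
  by_cases hv : v = ρ
  · convert hN v using 1
    ext (u | u)
    · simp [hv, root_mem_subtree_iff hG.connected, Pi.single_apply, Subtype.coe_inj]
    · simp
  obtain ⟨y, hy⟩ := exists_isParent hG.connected (Subtype.coe_ne_coe.2 hv)
  obtain ⟨y, rfl⟩ := hy.exists_innerVertex hG
  convert N.sub_mem (hN v) (hN y) using 1
  ext (u | u)
  · by_cases huv : v = u
    · have hyv := hy.notMem_subtree
      simp [← huv, self_mem_subtree, hyv]
    · simp [hy.mem_subtree_iff hG, Subtype.coe_inj, huv, Ne.symm huv]
  · simp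

open scoped Classical in
theorem pairCoord_isParent_comp_inl (hG : G.IsTree) (h : IsParent G ρ x y) :
    pairCoord G ρ s(x, y) ∘ .inl =
      fun u : InnerVertex G => if x ∈ subtree G ρ u then 1 else 0 := by
  ext u
  by_cases hx : x ∈ subtree G ρ u <;> simp [pairCoord_mk_inl, h.mem_subtree_iff hG, hx]

theorem eq_top_of_pairCoord_mem (hG : G.IsTree) (hr : G.degree r = 1) (hρr : G.Adj ρ r)
    (hl : G.degree l = 1) (hlr : l ≠ r) (hN : ∀ w : InnerVertex G, pairCoord G ρ s(r, w) ∈ N)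
    (hNl : pairCoord G ρ s(r, l) ∈ N)
    (hN_child : ∀ v ≠ ρ, ∃ c, IsParent G ρ v c ∧ pairCoord G ρ s(↑v, c) ∈ N) : N = ⊤ := by
  classical
  have h_inr := single_inr_mem_of_pairCoord_leaf_mem hG hr hρr hl hlr hN hNl
  have h_inl : ∀ v, Pi.single (.inl v) 1 ∈ N := by
    refine single_inl_mem_of_ancestor_indicator_mem (ρ := ρ) hG fun v => ?_
    obtain ⟨c, hc, hcN⟩ : ∃ c, IsParent G ρ v c ∧ pairCoord G ρ s(↑v, c) ∈ N := by
      by_cases hv : v = ρ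
      · subst hv
        exact ⟨r, isParent_of_degree_eq_one hG.connected hr hρr hρr.ne', Sym2.eq_swap ▸ hN v⟩
      · exact hN_child v hv
    rw [← pairCoord_isParent_comp_inl hG hc]
    exact sumElim_inl_zero_mem h_inr hcN
  exact N.eq_top_iff'.2 fun f => mem_of_forall_single_mem fun j _ => Sum.rec h_inl h_inr j

theorem exists_span_range_pairCoordMatrix_submatrix_eq_top (hG : G.IsTree)
    (hV : 3 ≤ ENat.card V) :
    ∃ (ρ : InnerVertex G) (φ : InnerVertex G ⊕ InnerVertex G → {s : Sym2 V // ¬s.IsDiag}),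
      Submodule.span ℤ (Set.range ((pairCoordMatrix G ρ).submatrix φ id).row) = ⊤ := by
  have : Nontrivial V := (ENat.one_lt_card_iff_nontrivial V).1 (lt_of_lt_of_le (by norm_num) hV)
  obtain ⟨r, l, hrl, hr, hl⟩ := hG.exists_ne_and_degree_eq_one
  obtain ⟨t, hrt, -⟩ := degree_eq_one_iff_existsUnique_adj.1 hr
  let ρ : InnerVertex G := ⟨t, degree_ne_one_of_adj_of_degree_eq_one hG.connected hV hr hrt⟩
  choose! child h_child using fun (v : InnerVertex G) (hv : v ≠ ρ) =>
    exists_isParent_of_degree_ne_one hG v.2 (Subtype.coe_ne_coe.2 hv)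
  let φ : InnerVertex G ⊕ InnerVertex G → {s : Sym2 V // ¬s.IsDiag} := Sum.elim
    (fun w => ⟨s(r, w), Sym2.mk_isDiag_iff.not.2 (ne_of_degree_eq_one w hr).symm⟩)
    fun v => if hv : v = ρ then ⟨s(r, l), Sym2.mk_isDiag_iff.not.2 hrl⟩
      else ⟨s(↑v, child v), Sym2.mk_isDiag_iff.not.2 (h_child v hv).1.ne⟩
  have h_mem : ∀ j, pairCoord G ρ (φ j) ∈
      Submodule.span ℤ (Set.range ((pairCoordMatrix G ρ).submatrix φ id).row) :=
    fun j => Submodule.subset_span ⟨j, rfl⟩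
  refine ⟨ρ, φ, eq_top_of_pairCoord_mem hG hr hrt.symm hl hrl.symm (fun w => h_mem (.inl w)) ?_
    fun v hv => ⟨child v, h_child v hv, ?_⟩⟩
  · simpa [φ] using h_mem (.inr ρ)
  · simpa [φ, hv] using h_mem (.inr v)

end SpanningPairs

/-- For a tree `T` on `n ≥ 3` vertices with `p` pendant vertices, there is a set `B`
of `2(n-p)` two-element subsets of the vertex set such that the rows of `Max4PC_T`
indexed by `B` form a basis of the row space of `Max4PC_T` over `ℚ`, and the
principal submatrix `Max4PC_T[B,B]` has determinant `(-1)^(n-p) * 2^(2(n-p-1))`. -/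
theorem exists_basis_max4Matrix {V : Type*} [Fintype V] [DecidableEq V]
    (G : SimpleGraph V) [DecidableRel G.Adj] (hT : G.IsTree) (n p : ℕ)
    (hn : Fintype.card V = n) (hn3 : 3 ≤ n)
    (hp : (Finset.univ.filter fun v : V => G.degree v = 1).card = p) :
    ∃ B : Finset {s : Sym2 V // ¬ s.IsDiag},
      B.card = 2 * (n - p) ∧
      LinearIndependent ℚ (fun b : ↥B => max4Matrix G b.1) ∧
      Submodule.span ℚ (Set.range (fun b : ↥B => max4Matrix G b.1)) =
        Submodule.span ℚ (Set.range (fun s => max4Matrix G s)) ∧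
      ((max4Matrix G).submatrix (fun b : ↥B => b.1) (fun b : ↥B => b.1)).det =
        (-1 : ℚ) ^ (n - p) * 2 ^ (2 * (n - p - 1)) := by
  obtain ⟨ρ, φ, hφ⟩ := exists_span_range_pairCoordMatrix_submatrix_eq_top hT
    (by rw [ENat.card_eq_coe_fintype_card, hn]; exact_mod_cast hn3)
  obtain ⟨B, h_card, h_indep, h_span, h_det⟩ :=
    exists_finset_rows_basis_of_gram (max4Matrix_eq_gram hT ρ) (by simp [det_pairForm]) hφ
  have h_inner : Fintype.card (InnerVertex G) = n - p := by rw [card_innerVertex, hn, hp]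
  refine ⟨B, ?_, h_indep, h_span, ?_⟩
  · rw [h_card, Fintype.card_sum, h_inner, two_mul]
  · rw [h_det, det_pairForm, h_inner]
    norm_cast
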